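/- arXiv:math/0007057 — 2 statements merged into one kernel-verified Lean document; each statement's English description precedes it below -/
import Mathlib

section
/- Let ψ : ℂ → ℝ be a bounded continuous function that is weakly subharmonic, in the sense that ∫_ℂ ψ(z)·Δφ(z) dλ(z) ≥ 0 for every smooth compactly supported function φ : ℂ → ℝ with φ ≥ 0. Then ψ is constant. (This is Lemma 5 of the paper: any bounded weakly subharmonic function in the two-dimensional plane is a constant.) -/
open MeasureTheory

/-- The Euclidean Laplacian of a function `φ : ℂ → ℝ`, computed as the sum of the
second derivatives in the directions `1` and `I` (identifying `ℂ` with `ℝ²`). -/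
noncomputable def laplacianC (φ : ℂ → ℝ) (z : ℂ) : ℝ :=
  fderiv ℝ (fun w => fderiv ℝ φ w 1) z 1 +
    fderiv ℝ (fun w => fderiv ℝ φ w Complex.I) z Complex.I

lemma second_le {f f' : ℝ → ℝ} {c : ℝ} (h1 : ∀ᶠ t in nhds 0, HasDerivAt f (f' t) t)
    (h2 : HasDerivAt f' c 0) (hm : IsLocalMax f 0) : c ≤ 0 := by
  by_contra! hc
  have e : deriv f =ᶠ[nhds 0] f' := h1.mono fun t ht => ht.deriv
  have d2 : deriv (deriv f) 0 = c := by rw [e.deriv_eq, h2.deriv]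
  have hmin := isLocalMin_of_deriv_deriv_pos (by rw [d2]; exact hc) hm.deriv_eq_zero
    h1.self_of_nhds.continuousAt
  have : f =ᶠ[nhds 0] fun _ => f 0 := by
    filter_upwards [hm, hmin] with t a b using le_antisymm a b
  have : deriv (deriv f) 0 = 0 := by
    rw [this.deriv.deriv_eq]; simp
  linarith

lemma line_deriv {u : ℂ → ℝ} (hu : ContDiff ℝ 2 u) (p v : ℂ) :
    (∀ t : ℝ, HasDerivAt (fun t : ℝ => u (p + t * v)) (fderiv ℝ u (p + t * v) v) t) ∧
    HasDerivAt (fun t : ℝ => fderiv ℝ u (p + t * v) v)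
      (fderiv ℝ (fun w => fderiv ℝ u w v) p v) 0 := by
  have hl : ∀ t : ℝ, HasDerivAt (fun t : ℝ => p + t * v) v t := by
    intro t
    simpa using ((Complex.ofRealCLM.hasDerivAt (x := t)).mul_const v).const_add p
  have hd : Differentiable ℝ (fun w => fderiv ℝ u w v) := by
    have : ContDiff ℝ 1 (fun w => fderiv ℝ u w v) :=
      (hu.fderiv_right (m := 1) (by norm_num)).clm_apply contDiff_const
    exact this.differentiable (by norm_num)
  refine ⟨fun t => ?_, ?_⟩
  · exact ((hu.differentiable (by norm_num)) _).hasFDerivAt.comp_hasDerivAt t (hl t)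
  · have := (hd (p + (0:ℝ) * v)).hasFDerivAt.comp_hasDerivAt (0:ℝ) (hl 0)
    simpa [Function.comp_def] using this

lemma barrier_deriv (x y k : ℝ) (hq : 0 < x ^ 2 + y ^ 2)
    (hl : 0 < 1 + (Real.log (x ^ 2 + y ^ 2) - k)) :
    (∀ᶠ t : ℝ in nhds 0, HasDerivAt
      (fun t : ℝ => Real.log (1 + (Real.log ((x + t) ^ 2 + y ^ 2) - k)))
      (2 * (x + t) / ((x + t) ^ 2 + y ^ 2) / (1 + (Real.log ((x + t) ^ 2 + y ^ 2) - k))) t) ∧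
    HasDerivAt (fun t : ℝ =>
      2 * (x + t) / ((x + t) ^ 2 + y ^ 2) / (1 + (Real.log ((x + t) ^ 2 + y ^ 2) - k)))
      (((2 * (x ^ 2 + y ^ 2) - 4 * x ^ 2) / (x ^ 2 + y ^ 2) ^ 2 *
        (1 + (Real.log (x ^ 2 + y ^ 2) - k)) - (2 * x / (x ^ 2 + y ^ 2)) ^ 2) /
        (1 + (Real.log (x ^ 2 + y ^ 2) - k)) ^ 2) 0 := by
  have hQ : ∀ t : ℝ, HasDerivAt (fun t : ℝ => (x + t) ^ 2 + y ^ 2) (2 * (x + t)) t := by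
    intro t
    simpa using ((((hasDerivAt_id t).const_add x).pow 2).add_const (y ^ 2))
  have hL : ∀ t : ℝ, 0 < (x + t) ^ 2 + y ^ 2 → HasDerivAt
      (fun t : ℝ => 1 + (Real.log ((x + t) ^ 2 + y ^ 2) - k))
      (2 * (x + t) / ((x + t) ^ 2 + y ^ 2)) t := by
    intro t ht
    exact (((hQ t).log ht.ne').sub_const k).const_add 1
  constructor
  · have c1 : ∀ᶠ t : ℝ in nhds 0, 0 < (x + t) ^ 2 + y ^ 2 :=
      (hQ 0).continuousAt.eventually_const_lt (by simpa using hq)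
    have c2 : ∀ᶠ t : ℝ in nhds 0, 0 < 1 + (Real.log ((x + t) ^ 2 + y ^ 2) - k) :=
      (hL 0 (by simpa using hq)).continuousAt.eventually_const_lt (by simpa using hl)
    filter_upwards [c1, c2] with t h1 h2
    exact (hL t h1).log h2.ne'
  · have hN : HasDerivAt (fun t : ℝ => 2 * (x + t)) 2 0 := by
      simpa using ((hasDerivAt_id (0:ℝ)).const_add x).const_mul 2
    have := (hN.div (hQ 0) (by simpa using hq.ne')).div (hL 0 (by simpa using hq))
      (by simpa using hl.ne')
    refine HasDerivAt.congr_deriv this ?_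
    simp only [add_zero, Pi.div_apply]
    ring

lemma barrier_sum (x y l : ℝ) (hq : 0 < x ^ 2 + y ^ 2) (hl : 0 < l) :
    ((2 * (x ^ 2 + y ^ 2) - 4 * x ^ 2) / (x ^ 2 + y ^ 2) ^ 2 * l
        - (2 * x / (x ^ 2 + y ^ 2)) ^ 2) / l ^ 2 +
    ((2 * (x ^ 2 + y ^ 2) - 4 * y ^ 2) / (x ^ 2 + y ^ 2) ^ 2 * l
        - (2 * y / (x ^ 2 + y ^ 2)) ^ 2) / l ^ 2 < 0 := by
  have : ((2 * (x ^ 2 + y ^ 2) - 4 * x ^ 2) / (x ^ 2 + y ^ 2) ^ 2 * l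
        - (2 * x / (x ^ 2 + y ^ 2)) ^ 2) / l ^ 2 +
    ((2 * (x ^ 2 + y ^ 2) - 4 * y ^ 2) / (x ^ 2 + y ^ 2) ^ 2 * l
        - (2 * y / (x ^ 2 + y ^ 2)) ^ 2) / l ^ 2 = - (4 / ((x ^ 2 + y ^ 2) * l ^ 2)) := by
    field_simp
    ring
  rw [this]
  have : 0 < 4 / ((x ^ 2 + y ^ 2) * l ^ 2) := by positivity
  linarith

/-- No interior local maximum of `u - ε F`. -/
lemma no_local_max {u : ℂ → ℝ} (hu : ContDiff ℝ 2 u) (hΔ : ∀ z, 0 ≤ laplacianC u z)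
    (z₀ p : ℂ) (k ε : ℝ) (hε : 0 < ε) (hp : 0 < Complex.normSq (p - z₀))
    (hl : 0 < 1 + (Real.log (Complex.normSq (p - z₀)) - k)) 
    (hm : IsLocalMax (fun w => u w -
      ε * Real.log (1 + (Real.log (Complex.normSq (w - z₀)) - k))) p) : False := by
  set x := (p - z₀).re with hx
  set y := (p - z₀).im with hy
  have hN : Complex.normSq (p - z₀) = x ^ 2 + y ^ 2 := by
    rw [Complex.normSq_apply, hx, hy]; ring
  rw [hN] at hp hl
  have hp' : 0 < y ^ 2 + x ^ 2 := by linarith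
  have hl' : 0 < 1 + (Real.log (y ^ 2 + x ^ 2) - k) := by rwa [add_comm (y^2)]
  have hmv : ∀ v : ℂ, IsLocalMax (fun t : ℝ => u (p + t * v) -
      ε * Real.log (1 + (Real.log (Complex.normSq (p + t * v - z₀)) - k))) 0 := by
    intro v
    have hc : Filter.Tendsto (fun t : ℝ => p + t * v) (nhds 0) (nhds p) := by
      have : Continuous (fun t : ℝ => p + t * v) := by fun_prop
      simpa using this.tendsto 0
    have := hc.eventually hm
    simpa [IsLocalMax, IsMaxFilter] using this
  have e1 : ∀ t : ℝ, Complex.normSq (p + t * 1 - z₀) = (x + t) ^ 2 + y ^ 2 := by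
    intro t
    rw [Complex.normSq_apply, hx, hy]; simp; ring
  have e2 : ∀ t : ℝ, Complex.normSq (p + t * Complex.I - z₀) = (y + t) ^ 2 + x ^ 2 := by
    intro t
    rw [Complex.normSq_apply, hx, hy]; simp; ring
  have m1 := hmv 1
  have m2 := hmv Complex.I
  simp only [e1] at m1
  simp only [e2] at m2
  obtain ⟨a1, a2⟩ := line_deriv hu p 1
  obtain ⟨b1, b2⟩ := line_deriv hu p Complex.I
  obtain ⟨c1, c2⟩ := barrier_deriv x y k hp hl
  obtain ⟨d1, d2⟩ := barrier_deriv y x k hp' hl'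
  have r1 := second_le (c1.mono fun t ht => (a1 t).sub (ht.const_mul ε)) (a2.sub (c2.const_mul ε)) m1
  have r2 := second_le (d1.mono fun t ht => (b1 t).sub (ht.const_mul ε)) (b2.sub (d2.const_mul ε)) m2
  have s := barrier_sum x y _ hp hl
  have := hΔ p
  unfold laplacianC at this
  rw [add_comm (y^2) (x^2)] at r2
  have := mul_neg_of_pos_of_neg hε s
  linarith

lemma smooth_case {u : ℂ → ℝ} (hu : ContDiff ℝ 2 u) (hΔ : ∀ z, 0 ≤ laplacianC u z)
    (M : ℝ) (hM : ∀ z, u z ≤ M) (z₀ z : ℂ) : u z ≤ u z₀ := by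
  by_contra! hlt
  obtain ⟨c, hc0, hcz⟩ := exists_between hlt
  have hne : z ≠ z₀ := by rintro rfl; exact lt_irrefl _ hlt
  have hd : 0 < ‖z - z₀‖ := norm_pos_iff.2 (sub_ne_zero.2 hne)
  obtain ⟨δ, hδ, hball⟩ := Metric.eventually_nhds_iff.1
    (hu.continuous.continuousAt.eventually_lt_const hc0)
  obtain ⟨r, hr0, hr⟩ := exists_between (lt_min hδ hd)
  have hrδ : r < δ := hr.trans_le (min_le_left _ _)
  have hrz : r < ‖z - z₀‖ := hr.trans_le (min_le_right _ _)
  set G : ℝ → ℝ := fun s => Real.log (1 + (Real.log (s ^ 2) - Real.log (r ^ 2))) with hG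
  have hGr : G r = 0 := by simp [hG]
  have hlp : ∀ s, r ≤ s → 0 < 1 + (Real.log (s ^ 2) - Real.log (r ^ 2)) := by
    intro s hs
    have : Real.log (r ^ 2) ≤ Real.log (s ^ 2) := Real.log_le_log (by positivity) (by gcongr)
    linarith
  have hGt : Filter.Tendsto G Filter.atTop Filter.atTop := by
    apply Real.tendsto_log_atTop.comp
    apply Filter.tendsto_atTop_add_const_left
    apply Filter.tendsto_atTop_add_const_right
    exact Real.tendsto_log_atTop.comp (Filter.tendsto_pow_atTop (by norm_num))
  obtain ⟨ε, hε, hεz⟩ : ∃ ε > 0, c < u z - ε * G ‖z - z₀‖ := by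
    have : Filter.Tendsto (fun ε : ℝ => u z - ε * G ‖z - z₀‖) (nhds 0) (nhds (u z)) := by
      have : Continuous (fun ε : ℝ => u z - ε * G ‖z - z₀‖) := by fun_prop
      simpa using this.tendsto 0
    have h := (this.eventually_const_lt hcz).filter_mono (nhdsWithin_le_nhds (s := Set.Ioi 0))
    obtain ⟨ε, h1, h2⟩ := (h.and self_mem_nhdsWithin).exists
    exact ⟨ε, h2, h1⟩
  obtain ⟨R, hR1, hR2⟩ := ((hGt.eventually_ge_atTop ((M - c) / ε)).and
    (Filter.eventually_ge_atTop ‖z - z₀‖)).exists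
  set g : ℂ → ℝ := fun w => u w - ε * G ‖w - z₀‖ with hg
  set K : Set ℂ := Metric.closedBall z₀ R \ Metric.ball z₀ r with hK
  have hKc : IsCompact K := (isCompact_closedBall z₀ R).diff Metric.isOpen_ball
  have hmem : ∀ w, w ∈ K ↔ ‖w - z₀‖ ≤ R ∧ r ≤ ‖w - z₀‖ := by
    intro w; simp [hK, dist_eq_norm]
  have hgc : ContinuousOn g K := by
    apply hu.continuous.continuousOn.sub
    apply continuousOn_const.mul
    have i1 : ContinuousOn (fun w : ℂ => ‖w - z₀‖ ^ 2) K := by fun_prop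
    refine ContinuousOn.log (continuousOn_const.add ((i1.log ?_).sub continuousOn_const)) ?_
    · intro w hw
      have := ((hmem w).1 hw).2
      have : 0 < ‖w - z₀‖ := by linarith
      positivity
    · intro w hw
      exact (hlp _ ((hmem w).1 hw).2).ne'
  obtain ⟨p, hpK, hpm⟩ := hKc.exists_isMaxOn ⟨z, (hmem z).2 ⟨hR2, hrz.le⟩⟩ hgc
  have hgp : c < g p := hεz.trans_le (hpm ((hmem z).2 ⟨hR2, hrz.le⟩))
  obtain ⟨q1, q2⟩ := (hmem p).1 hpK
  have hpr : r < ‖p - z₀‖ := by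
    rcases q2.lt_or_eq with h | h
    · exact h
    · exfalso
      have h1 : u p < c := hball (by rw [dist_eq_norm, ← h]; exact hrδ)
      have h2 : g p = u p := by simp only [hg]; rw [← h, hGr]; ring
      linarith
  have hpR : ‖p - z₀‖ < R := by
    rcases q1.lt_or_eq with h | h
    · exact h
    · exfalso
      have h1 := hM p
      have h2 : g p = u p - ε * G R := by simp only [hg]; rw [h]
      have h3 : M - c ≤ G R * ε := (div_le_iff₀ hε).1 hR1
      linarith
  have hloc : IsLocalMax g p := by
    have i1 : ∀ᶠ w in nhds p, r < ‖w - z₀‖ :=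
      (by fun_prop : Continuous fun w : ℂ => ‖w - z₀‖).continuousAt.eventually_const_lt hpr
    have i2 : ∀ᶠ w in nhds p, ‖w - z₀‖ < R :=
      (by fun_prop : Continuous fun w : ℂ => ‖w - z₀‖).continuousAt.eventually_lt_const hpR
    filter_upwards [i1, i2] with w h1 h2
    exact hpm ((hmem w).2 ⟨h2.le, h1.le⟩)
  have hpp : 0 < ‖p - z₀‖ := by linarith
  refine no_local_max hu hΔ z₀ p (Real.log (r ^ 2)) ε hε ?_ ?_ ?_
  · rw [Complex.normSq_eq_norm_sq]; positivity
  · rw [Complex.normSq_eq_norm_sq]; exact hlp _ q2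
  · simpa only [Complex.normSq_eq_norm_sq] using hloc

lemma fderiv_reflect {ρ : ℂ → ℝ} (hρ : Differentiable ℝ ρ) (x t v : ℂ) :
    fderiv ℝ (fun s => ρ (x - s)) t v = - fderiv ℝ ρ (x - t) v := by
  have h : HasFDerivAt (fun s : ℂ => x - s) (-ContinuousLinearMap.id ℝ ℂ) t :=
    (hasFDerivAt_id t).const_sub x
  have := (hρ (x - t)).hasFDerivAt.comp t h
  have e := this.fderiv
  simp only [Function.comp_def] at e
  rw [e]; simp

lemma contDiff_dir {ρ : ℂ → ℝ} (hρ : ContDiff ℝ (⊤ : ℕ∞) ρ) (v : ℂ) :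
    ContDiff ℝ (⊤ : ℕ∞) (fun w => fderiv ℝ ρ w v) :=
  (hρ.fderiv_right (m := (⊤ : ℕ∞)) (by simp)).clm_apply contDiff_const

lemma second_reflect {ρ : ℂ → ℝ} (hρ : ContDiff ℝ (⊤ : ℕ∞) ρ) (x t v : ℂ) :
    fderiv ℝ (fun w => fderiv ℝ (fun s => ρ (x - s)) w v) t v =
      fderiv ℝ (fun w => fderiv ℝ ρ w v) (x - t) v := by
  have : (fun w => fderiv ℝ (fun s => ρ (x - s)) w v) =
      fun w => - (fun s => fderiv ℝ ρ s v) (x - w) := by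
    funext w; exact fderiv_reflect (hρ.differentiable (by simp)) x w v
  rw [this, fderiv_fun_neg]
  have := fderiv_reflect ((contDiff_dir hρ v).differentiable (by simp)) x t v
  simp [this]

open ContinuousLinearMap in
lemma fderiv_conv {ψ ρ : ℂ → ℝ} (hψ : Continuous ψ) (hρ : ContDiff ℝ (⊤ : ℕ∞) ρ)
    (hs : HasCompactSupport ρ) (x v : ℂ) :
    fderiv ℝ (convolution ψ ρ (lsmul ℝ ℝ).flip volume) x v =
      convolution ψ (fun w => fderiv ℝ ρ w v) (lsmul ℝ ℝ).flip volume x := by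
  have h1 : ContDiff ℝ 1 ρ := hρ.of_le (by exact_mod_cast le_top)
  rw [(hs.hasFDerivAt_convolution_right _ hψ.locallyIntegrable h1 x).fderiv]
  exact convolution_precompR_apply _ hψ.locallyIntegrable (hs.fderiv ℝ)
    (h1.continuous_fderiv (by norm_num)) x v

open ContinuousLinearMap in
lemma second_conv {ψ ρ : ℂ → ℝ} (hψ : Continuous ψ) (hρ : ContDiff ℝ (⊤ : ℕ∞) ρ)
    (hs : HasCompactSupport ρ) (x v : ℂ) :
    fderiv ℝ (fun w => fderiv ℝ (convolution ψ ρ (lsmul ℝ ℝ).flip volume) w v) x v =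
      ∫ t, ψ t * fderiv ℝ (fun w => fderiv ℝ (fun s => ρ (x - s)) w v) t v := by
  have : (fun w => fderiv ℝ (convolution ψ ρ (lsmul ℝ ℝ).flip volume) w v) =
      convolution ψ (fun w => fderiv ℝ ρ w v) (lsmul ℝ ℝ).flip volume := by
    funext w; exact fderiv_conv hψ hρ hs w v
  rw [this, fderiv_conv hψ (contDiff_dir hρ v) (hs.fderiv_apply ℝ v), convolution_def]
  congr 1
  funext t
  rw [second_reflect hρ]
  simp [mul_comm]

open ContinuousLinearMap in
lemma laplacian_conv {ψ ρ : ℂ → ℝ} (hψ : Continuous ψ) (hρ : ContDiff ℝ (⊤ : ℕ∞) ρ)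
    (hs : HasCompactSupport ρ) (x : ℂ) :
    laplacianC (convolution ψ ρ (lsmul ℝ ℝ).flip volume) x =
      ∫ t, ψ t * laplacianC (fun s => ρ (x - s)) t := by
  have hρ' : ContDiff ℝ (⊤ : ℕ∞) (fun s => ρ (x - s)) := hρ.comp (contDiff_const.sub contDiff_id)
  have hs' : HasCompactSupport (fun s => ρ (x - s)) :=
    hs.comp_homeomorph (Homeomorph.subLeft x)
  have hi : ∀ v : ℂ, Integrable
      (fun t => ψ t * fderiv ℝ (fun w => fderiv ℝ (fun s => ρ (x - s)) w v) t v) := by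
    intro v
    apply Continuous.integrable_of_hasCompactSupport
    · exact hψ.mul (contDiff_dir (contDiff_dir hρ' v) v).continuous
    · exact ((hs'.fderiv_apply ℝ v).fderiv_apply ℝ v).mul_left
  unfold laplacianC
  rw [second_conv hψ hρ hs, second_conv hψ hρ hs, ← integral_add (hi 1) (hi Complex.I)]
  simp only [mul_add]

/-- Any bounded continuous weakly subharmonic function on the plane `ℂ ≅ ℝ²` is constant. -/
theorem bounded_weakly_subharmonic_const (ψ : ℂ → ℝ)
    (hbdd : ∃ M : ℝ, ∀ z : ℂ, |ψ z| ≤ M)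
    (hcont : Continuous ψ)
    (hsub : ∀ φ : ℂ → ℝ, ContDiff ℝ (⊤ : ℕ∞) φ → HasCompactSupport φ → (∀ z, 0 ≤ φ z) →
      0 ≤ ∫ z : ℂ, ψ z * laplacianC φ z) :
    ∀ z w : ℂ, ψ z = ψ w := by
  obtain ⟨M, hM⟩ := hbdd
  let B : ℕ → ContDiffBump (0 : ℂ) := fun n =>
    ⟨1 / (n + 1 : ℝ) / 2, 1 / (n + 1 : ℝ), by positivity,
      half_lt_self (by positivity)⟩
  have key : ∀ n z w, 
      (convolution ((B n).normed volume) ψ (ContinuousLinearMap.lsmul ℝ ℝ) volume) z ≤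
      (convolution ((B n).normed volume) ψ (ContinuousLinearMap.lsmul ℝ ℝ) volume) w := by
    intro n z w
    have hρ : ContDiff ℝ (⊤ : ℕ∞) ((B n).normed (volume : Measure ℂ)) := (B n).contDiff_normed
    have hs : HasCompactSupport ((B n).normed (volume : Measure ℂ)) :=
      (B n).hasCompactSupport_normed
    rw [← convolution_flip]
    have hC : ContDiff ℝ 2 (convolution ψ ((B n).normed volume)
        (ContinuousLinearMap.lsmul ℝ ℝ).flip volume) :=
      hs.contDiff_convolution_right _ hcont.locallyIntegrable
        (hρ.of_le (by exact_mod_cast le_top))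
    refine smooth_case hC ?_ M ?_ w z
    · intro x
      rw [laplacian_conv hcont hρ hs]
      exact hsub _ (hρ.comp (contDiff_const.sub contDiff_id))
        (hs.comp_homeomorph (Homeomorph.subLeft x)) (fun _ => (B n).nonneg_normed _)
    · intro x
      rw [convolution_flip, convolution_def]
      have h1 : ∫ t, (B n).normed volume t * M = M := by
        rw [integral_mul_const, (B n).integral_normed, one_mul]
      have hi : Integrable (fun t => (B n).normed volume t * M) (volume : Measure ℂ) :=
        (hρ.continuous.integrable_of_hasCompactSupport hs).mul_const M
      refine (Real.le_norm_self _).trans ((norm_integral_le_of_norm_le hi ?_).trans h1.le)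
      refine Filter.Eventually.of_forall fun t => ?_
      have h0 := (B n).nonneg_normed (μ := volume) t
      simp only [ContinuousLinearMap.lsmul_apply, smul_eq_mul, norm_mul, Real.norm_eq_abs]
      rw [abs_of_nonneg h0]
      exact mul_le_mul_of_nonneg_left (hM _) h0
  have lim : ∀ z, Filter.Tendsto (fun n =>
      (convolution ((B n).normed volume) ψ (ContinuousLinearMap.lsmul ℝ ℝ) volume) z)
      Filter.atTop (nhds (ψ z)) := fun z =>
    ContDiffBump.convolution_tendsto_right_of_continuous
      tendsto_one_div_add_atTop_nhds_zero_nat hcont z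
  intro z w
  exact le_antisymm (le_of_tendsto_of_tendsto' (lim z) (lim w) fun n => key n z w)
    (le_of_tendsto_of_tendsto' (lim w) (lim z) fun n => key n w z)
end

section
/- Let (Ω, μ) be a measure space, let Y, u : Ω → ℝ be measurable with u ≥ 0 everywhere, and for each k ≥ 0 define X_k := Y · Σ_{i=0}^k u^i/i!. Then for all k ≤ m, ∫ X_k² dμ + ∫ (X_m − X_k)² dμ ≤ ∫ X_m² dμ (as integrals with values in the extended nonnegative reals). (This is the key inequality in Section 6.2 showing that the truncations X_{,k} of X = Y·e^u form a Cauchy sequence in L².) -/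
open MeasureTheory Finset

/-- Key inequality of Section 6.2: for `u ≥ 0` and the truncations
`X_k = Y · Σ_{i=0}^k uⁱ/i!`, one has `∫ X_k² + ∫ (X_m − X_k)² ≤ ∫ X_m²` for `k ≤ m`,
as integrals valued in the extended nonnegative reals. -/
theorem truncation_square_inequality {Ω : Type*} [MeasurableSpace Ω] (μ : Measure Ω)
    (Y u : Ω → ℝ) (hY : Measurable Y) (hu : Measurable u) (hu0 : ∀ x, 0 ≤ u x)
    (X : ℕ → Ω → ℝ)
    (hX : ∀ k x, X k x = Y x * ∑ i ∈ Finset.range (k + 1), u x ^ i / (Nat.factorial i))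
    (k m : ℕ) (hkm : k ≤ m) :
    ∫⁻ x, ENNReal.ofReal ((X k x) ^ 2) ∂μ +
        ∫⁻ x, ENNReal.ofReal ((X m x - X k x) ^ 2) ∂μ
      ≤ ∫⁻ x, ENNReal.ofReal ((X m x) ^ 2) ∂μ := by
  refine (le_lintegral_add _ _).trans (lintegral_mono fun x => ?_)
  rw [← ENNReal.ofReal_add (sq_nonneg _) (sq_nonneg _)]
  apply ENNReal.ofReal_le_ofReal
  rw [hX k x, hX m x]
  have hterm : ∀ i : ℕ, 0 ≤ u x ^ i / (Nat.factorial i : ℝ) := fun i =>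
    div_nonneg (pow_nonneg (hu0 x) i) (Nat.cast_nonneg _)
  have h0 : 0 ≤ ∑ i ∈ Finset.range (k + 1), u x ^ i / (Nat.factorial i : ℝ) :=
    Finset.sum_nonneg fun i _ => hterm i
  have h1 : ∑ i ∈ Finset.range (k + 1), u x ^ i / (Nat.factorial i : ℝ)
      ≤ ∑ i ∈ Finset.range (m + 1), u x ^ i / (Nat.factorial i : ℝ) :=
    Finset.sum_le_sum_of_subset_of_nonneg
      (Finset.range_mono (by omega)) fun i _ _ => hterm i
  generalize (∑ i ∈ Finset.range (k + 1), u x ^ i / (Nat.factorial i : ℝ)) = a at *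
  generalize (∑ i ∈ Finset.range (m + 1), u x ^ i / (Nat.factorial i : ℝ)) = b at *
  have h2 : 0 ≤ Y x ^ 2 * (a * (b - a)) :=
    mul_nonneg (sq_nonneg _) (mul_nonneg h0 (sub_nonneg.2 h1))
  nlinarith [h2]
end
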